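/- arXiv:gr-qc/0010008 — 2 statements merged into one kernel-verified Lean document; each statement's English description precedes it below -/
import Mathlib

section
/- Critical phase, order √N: at the critical point μ₁ = log 6, for every δ > 0 there exists ε > 0 such that liminf_{N→∞, N even} P_{N, log 6}({m : ε·√N ≤ m ≤ ε^{−1}·√N}) ≥ 1 − δ; i.e. the boundary length is of order √N with probability tending to one. -/
open Filter Real MeasureTheory

/-- Number of rooted quasitriangulations of a sphere with a hole with `N` triangles and
`m` boundary edges (Goulden–Jackson), with `j = (N - m)/2`. -/
noncomputable def C0 (N m : ℕ) : ℝ :=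
  (2 : ℝ) ^ ((N - m) / 2 + 2) * (Nat.factorial (2 * m + 3 * ((N - m) / 2) - 1) : ℝ) *
    (Nat.factorial (2 * m - 3) : ℝ) /
    ((Nat.factorial ((N - m) / 2 + 1) : ℝ) * (Nat.factorial (2 * m + 2 * ((N - m) / 2)) : ℝ) *
      ((Nat.factorial (m - 2) : ℝ)) ^ 2)

/-- The filter "N → ∞ along even integers". -/
def evenAtTop : Filter ℕ := Filter.atTop ⊓ Filter.principal {N | Even N}
/-- Weight of boundary length m: w_{μ₁}(N,m) = exp(-μ₁ m/2) C₀(N,m). -/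
noncomputable def w (μ₁ : ℝ) (N m : ℕ) : ℝ := Real.exp (-μ₁ * m / 2) * C0 N m

/-- Normalizing constant Θ_N(μ₁) = Σ_{m even, 2 ≤ m ≤ N} w_{μ₁}(N,m). -/
noncomputable def Θ (μ₁ : ℝ) (N : ℕ) : ℝ :=
  ∑ m ∈ (Finset.range (N + 1)).filter (fun m => Even m ∧ 2 ≤ m), w μ₁ N m

/-- Boundary-length distribution P_{N,μ₁}(m) = w_{μ₁}(N,m)/Θ_N(μ₁). -/
noncomputable def P (μ₁ : ℝ) (N m : ℕ) : ℝ := w μ₁ N m / Θ μ₁ N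

open scoped Classical

/-!
Halve the lengths: with `N = 2n` and `m = 2k`, two consecutive critical weights have a rational
quotient, the product of a factor in `[1, 1 + 1 / k]` and a factor in `[1 - 7k / n, 1 - k / (4n)]`.
(The weight is asymptotically proportional to `√k * exp (-4k² / (3n))`, but bounds on the quotient
are all that is needed.)
The lower bounds show that the weight drops by at most a factor `2` along `1 ≤ i ≤ j ≤ √n / 4`;
comparing the lengths below `ε√n` with those up to `√n / 4` bounds the mass of the former by `O(ε)`.
The upper bounds telescope to a second moment estimate `𝔼 k² = O(n)`, so that by Chebyshev's
inequality the lengths above `ε⁻¹√n` have mass `O(ε²)`.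
-/

section FiniteSums

variable {ι : Type*}

lemma card_mul_sum_le_card_mul_sum {κ R : Type*} [Semiring R] [PartialOrder R] [IsOrderedRing R]
    {s : Finset ι} {t : Finset κ} {f : ι → R} {g : κ → R}
    (h : ∀ i ∈ s, ∀ j ∈ t, f i ≤ g j) :
    t.card * ∑ i ∈ s, f i ≤ s.card * ∑ j ∈ t, g j := by
  calc t.card * ∑ i ∈ s, f i = ∑ i ∈ s, ∑ _j ∈ t, f i := by
        simp only [Finset.sum_const, nsmul_eq_mul, Finset.mul_sum]
    _ ≤ ∑ _i ∈ s, ∑ j ∈ t, g j :=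
        Finset.sum_le_sum fun i hi => Finset.sum_le_sum fun j hj => h i hi j hj
    _ = s.card * ∑ j ∈ t, g j := by rw [Finset.sum_const, nsmul_eq_mul]

lemma sum_le_sum_filter_and_add_sum_filter_not {M : Type*} [AddCommMonoid M] [PartialOrder M]
    [IsOrderedAddMonoid M] (s : Finset ι) {f : ι → M} (hf : ∀ i ∈ s, 0 ≤ f i) (p q : ι → Prop)
    [DecidablePred p] [DecidablePred q] :
    ∑ i ∈ s, f i ≤
      ∑ i ∈ s with p i ∧ q i, f i + (∑ i ∈ s with ¬p i, f i + ∑ i ∈ s with ¬q i, f i) := by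
  simp only [Finset.sum_filter, ← Finset.sum_add_distrib]
  refine Finset.sum_le_sum fun i hi => ?_
  have := hf i hi
  by_cases hp : p i <;> by_cases hq : q i <;> simp [hp, hq, this, le_add_of_nonneg_left]

lemma sq_mul_sum_filter_lt_le {R : Type*} [Ring R] [LinearOrder R] [IsStrictOrderedRing R]
    {s : Finset ι} {f X : ι → R} (hf : ∀ i ∈ s, 0 ≤ f i) {t : R} (ht : 0 ≤ t) :
    t ^ 2 * ∑ i ∈ s with t < X i, f i ≤ ∑ i ∈ s, X i ^ 2 * f i := by
  calc t ^ 2 * ∑ i ∈ s with t < X i, f i = ∑ i ∈ s with t < X i, t ^ 2 * f i := Finset.mul_sum ..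
    _ ≤ ∑ i ∈ s with t < X i, X i ^ 2 * f i := by
        refine Finset.sum_le_sum fun i hi => ?_
        obtain ⟨his, hlt⟩ := Finset.mem_filter.mp hi
        have := hf i his
        gcongr
    _ ≤ ∑ i ∈ s, X i ^ 2 * f i :=
        Finset.sum_le_sum_of_subset_of_nonneg (Finset.filter_subset _ _)
          fun i hi _ => mul_nonneg (sq_nonneg _) (hf i hi)

lemma sum_filter_even_eq_sum_Icc {M : Type*} [AddCommMonoid M] (n : ℕ) (p : ℕ → Prop)
    [DecidablePred p] (f : ℕ → M) :
    ∑ m ∈ Finset.range (2 * n + 1) with Even m ∧ 2 ≤ m ∧ p m, f m =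
      ∑ k ∈ Finset.Icc 1 n with p (2 * k), f (2 * k) := by
  have himage : (Finset.range (2 * n + 1)).filter (fun m => Even m ∧ 2 ≤ m ∧ p m) =
      ((Finset.Icc 1 n).filter (fun k => p (2 * k))).image (2 * ·) := by
    ext m
    simp only [Finset.mem_filter, Finset.mem_range, Finset.mem_image, Finset.mem_Icc]
    constructor
    · rintro ⟨hlt, hm, hle, hp⟩
      obtain ⟨k, rfl⟩ := hm.two_dvd
      exact ⟨k, ⟨by omega, hp⟩, rfl⟩
    · rintro ⟨k, ⟨hk, hp⟩, rfl⟩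
      exact ⟨by omega, even_two_mul k, by omega, hp⟩
  rw [himage, Finset.sum_image fun _ _ _ _ h => Nat.eq_of_mul_eq_mul_left two_pos h]

end FiniteSums

section RatioBounds

variable {a : ℕ → ℝ}

lemma sum_sq_mul_add_le_of_ratio_le {b : ℝ} {n : ℕ} (hn : 1 ≤ n)
    (hstep : ∀ k ∈ Finset.Ico 1 n, k * a (k + 1) ≤ (k + 1 - b * k ^ 2) * a k) :
    b * ∑ k ∈ Finset.Ico 1 n, (k : ℝ) ^ 2 * a k + (n - 1) * a n ≤
      2 * ∑ k ∈ Finset.Ico 1 n, a k := by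
  induction n, hn using Nat.le_induction with
  | base => simp
  | succ n hn ih =>
    have ih := ih fun k hk => hstep k (Finset.Ico_subset_Ico_right n.le_succ hk)
    have hlast := hstep n (by simp [hn])
    rw [Finset.sum_Ico_succ_top hn, Finset.sum_Ico_succ_top hn]
    push_cast
    linarith

lemma mul_sum_sq_le_two_mul_sum {b : ℝ} {n : ℕ} (hn : 1 ≤ n) (ha : 0 ≤ a n) (hb : b * n ≤ 1)
    (hstep : ∀ k ∈ Finset.Ico 1 n, k * a (k + 1) ≤ (k + 1 - b * k ^ 2) * a k) :
    b * ∑ k ∈ Finset.Icc 1 n, (k : ℝ) ^ 2 * a k ≤ 2 * ∑ k ∈ Finset.Icc 1 n, a k := by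
  have htelescope := sum_sq_mul_add_le_of_ratio_le hn hstep
  have hlast : b * n * (n * a n) ≤ 1 * (n * a n) := by gcongr
  simp only [← Finset.Ico_insert_right hn, Finset.sum_insert Finset.right_notMem_Ico]
  linarith

lemma le_two_mul_of_one_sub_mul_le (ha : ∀ k, 0 ≤ a k) {u : ℝ} (hu : 0 ≤ u) {L : ℕ}
    (huL : 2 * (u * L ^ 2) ≤ 1) (hstep : ∀ k ∈ Finset.Ico 1 L, (1 - u * k) * a k ≤ a (k + 1))
    {i j : ℕ} (hi : 1 ≤ i) (hij : i ≤ j) (hj : j ≤ L) : a i ≤ 2 * a j := by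
  obtain ⟨d, rfl⟩ := Nat.exists_eq_add_of_le hij
  have hL : (1 : ℝ) ≤ L := by exact_mod_cast hi.trans (hij.trans hj)
  have hd : (d : ℝ) ≤ L := by exact_mod_cast (by omega : d ≤ L)
  have huL_le : u * L ≤ u * L ^ 2 := by gcongr; nlinarith
  have hduL : d * (u * L) ≤ u * L ^ 2 := by
    calc d * (u * L) ≤ L * (u * L) := by gcongr
      _ = u * L ^ 2 := by ring
  have hgeom : (1 - u * L) ^ d * a i ≤ a (i + d) := by
    refine geom_le (u := fun e => a (i + e)) (by linarith) d fun e he => ?_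
    have heL : ((i + e : ℕ) : ℝ) ≤ L := by exact_mod_cast (by omega : i + e ≤ L)
    refine le_trans ?_ (hstep (i + e) (Finset.mem_Ico.mpr (by omega)))
    have := ha (i + e)
    gcongr
  have hbernoulli : 1 - d * (u * L) ≤ (1 - u * L) ^ d := by
    simpa only [mul_neg, ← sub_eq_add_neg] using
      one_add_mul_le_pow (a := -(u * L)) (by linarith) d
  have hhalf : 1 / 2 * a i ≤ (1 - u * L) ^ d * a i := by
    have := ha i
    gcongr
    linarith
  linarith

lemma sub_mul_sum_Icc_le (ha : ∀ k, 0 ≤ a k) {u : ℝ} (hu : 0 ≤ u) {K L n : ℕ}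
    (hKL : K ≤ L) (hLn : L ≤ n) (huL : 2 * (u * L ^ 2) ≤ 1)
    (hstep : ∀ k ∈ Finset.Ico 1 L, (1 - u * k) * a k ≤ a (k + 1)) :
    ((L : ℝ) - K) * ∑ k ∈ Finset.Icc 1 K, a k ≤ K * (2 * ∑ k ∈ Finset.Icc 1 n, a k) := by
  have hcompare : ∀ i ∈ Finset.Icc 1 K, ∀ j ∈ Finset.Ioc K L, a i ≤ 2 * a j := by
    intro i hi j hj
    rw [Finset.mem_Icc] at hi
    rw [Finset.mem_Ioc] at hj
    exact le_two_mul_of_one_sub_mul_le ha hu huL hstep hi.1 (by omega) hj.2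
  have haverage := card_mul_sum_le_card_mul_sum hcompare
  rw [Nat.card_Ioc, Nat.card_Icc, Nat.add_sub_cancel, Nat.cast_sub hKL, ← Finset.mul_sum]
    at haverage
  refine haverage.trans ?_
  gcongr
  · exact fun j _ _ => ha j
  · intro j hj
    rw [Finset.mem_Ioc] at hj
    exact Finset.mem_Icc.mpr (by omega)

end RatioBounds

section Weights

lemma C0_pos (N m : ℕ) : 0 < C0 N m := by
  unfold C0
  positivity

lemma w_pos (μ₁ : ℝ) (N m : ℕ) : 0 < w μ₁ N m :=
  mul_pos (exp_pos _) (C0_pos N m)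

lemma sum_P_le_one (μ₁ : ℝ) {N : ℕ} {s : Finset ℕ}
    (hs : s ⊆ (Finset.range (N + 1)).filter (fun m => Even m ∧ 2 ≤ m)) :
    ∑ m ∈ s, P μ₁ N m ≤ 1 := by
  have hle : ∑ m ∈ s, w μ₁ N m ≤ Θ μ₁ N :=
    Finset.sum_le_sum_of_subset_of_nonneg hs fun m _ _ => (w_pos μ₁ N m).le
  have hΘ : 0 ≤ Θ μ₁ N := Finset.sum_nonneg fun m _ => (w_pos μ₁ N m).le
  calc ∑ m ∈ s, P μ₁ N m = (∑ m ∈ s, w μ₁ N m) / Θ μ₁ N := (Finset.sum_div ..).symm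
    _ ≤ 1 := div_le_one_of_le₀ hle hΘ

lemma C0_eq_factorial_div (r j : ℕ) :
    C0 (r + 2 + 2 * j) (r + 2) =
      2 ^ (j + 2) * (2 * r + 3 * j + 3).factorial * (2 * r + 1).factorial /
        ((j + 1).factorial * (2 * r + 2 * j + 4).factorial * (r.factorial : ℝ) ^ 2) := by
  unfold C0
  rw [show (r + 2 + 2 * j - (r + 2)) / 2 = j by omega,
    show 2 * (r + 2) + 3 * j - 1 = 2 * r + 3 * j + 3 by omega,
    show 2 * (r + 2) - 3 = 2 * r + 1 by omega,
    show 2 * (r + 2) + 2 * j = 2 * r + 2 * j + 4 by omega, Nat.add_sub_cancel]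

lemma C0_add_two {N m : ℕ} (hm : 2 ≤ m) (hmN : m < N) (hparity : N ≡ m [MOD 2]) :
    C0 N (m + 2) = (3 * N + m) * (N - m + 2) * (4 * m ^ 2 - 1) /
      (2 * (N + m + 2) * (N + m + 1) * m * (m - 1)) * C0 N m := by
  obtain ⟨r, rfl⟩ := Nat.exists_eq_add_of_le' hm
  obtain ⟨j, rfl⟩ : ∃ j, N = r + 2 + 2 * (j + 1) :=
    ⟨(N - r - 4) / 2, by unfold Nat.ModEq at hparity; omega⟩
  have hN : r + 2 + 2 * (j + 1) = r + 2 + 2 + 2 * j := by ring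
  rw [C0_eq_factorial_div r (j + 1), hN, C0_eq_factorial_div (r + 2) j,
    show 2 * (r + 2) + 3 * j + 3 = 2 * r + 3 * (j + 1) + 3 + 1 by ring,
    show 2 * (r + 2) + 1 = 2 * r + 1 + 1 + 1 + 1 + 1 by ring,
    show 2 * (r + 2) + 2 * j + 4 = 2 * r + 2 * (j + 1) + 4 + 1 + 1 by ring,
    show r + 2 = r + 1 + 1 by ring]
  simp only [Nat.factorial_succ (2 * r + 3 * (j + 1) + 3), Nat.factorial_succ (2 * r + 1),
    Nat.factorial_succ (2 * r + 1 + 1), Nat.factorial_succ (2 * r + 1 + 1 + 1),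
    Nat.factorial_succ (2 * r + 1 + 1 + 1 + 1), Nat.factorial_succ (2 * r + 2 * (j + 1) + 4),
    Nat.factorial_succ (2 * r + 2 * (j + 1) + 4 + 1), Nat.factorial_succ r,
    Nat.factorial_succ (r + 1), Nat.factorial_succ (j + 1)]
  push_cast
  have hm_sub : (r : ℝ) + 1 + 1 - 1 ≠ 0 := by
    rw [add_sub_cancel_right]
    positivity
  field_simp
  ring

/-- The weight of boundary length `2k` among `2n` triangles at the critical point `μ₁ = log 6`.
Both arguments are halved, so that sums over even lengths become sums over `1 ≤ k ≤ n`. -/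
noncomputable def criticalWeight (n k : ℕ) : ℝ := w (log 6) (2 * n) (2 * k)

/-- The factor `1 + 1 / (2k) + O(1 / k²)` of `criticalWeight n (k + 1) / criticalWeight n k`, which
does not depend on `n` and makes the weight grow like `√k` at small lengths. -/
noncomputable def edgeRatio (k : ℝ) : ℝ := (16 * k ^ 2 - 1) / (8 * k * (2 * k - 1))

/-- The factor of `criticalWeight n (k + 1) / criticalWeight n k` that behaves like `1 - 8k / (3n)`
for `1 ≪ k ≪ n` and makes the weight decay like a Gaussian at lengths beyond `√n`. -/
noncomputable def bulkRatio (n k : ℝ) : ℝ :=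
  2 * (3 * n + k) * (n - k + 1) / (3 * (n + k + 1) * (2 * n + 2 * k + 1))

lemma criticalWeight_pos (n k : ℕ) : 0 < criticalWeight n k := w_pos _ _ _

lemma criticalWeight_succ {n k : ℕ} (hk : 1 ≤ k) (hkn : k < n) :
    criticalWeight n (k + 1) = edgeRatio k * bulkRatio n k * criticalWeight n k := by
  have hexp : exp (-log 6 * ((2 * (k + 1) : ℕ) : ℝ) / 2) =
      exp (-log 6 * ((2 * k : ℕ) : ℝ) / 2) / 6 := by
    rw [show -log 6 * ((2 * (k + 1) : ℕ) : ℝ) / 2 = -log 6 * ((2 * k : ℕ) : ℝ) / 2 - log 6 by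
      push_cast; ring, exp_sub, exp_log (by norm_num)]
  have hC0 := C0_add_two (N := 2 * n) (m := 2 * k) (by omega) (by omega)
    (by simp [Nat.ModEq])
  have hk' : (1 : ℝ) ≤ k := by exact_mod_cast hk
  have hden : (2 * k - 1 : ℝ) ≠ 0 := by linarith
  unfold criticalWeight w edgeRatio bulkRatio
  rw [hexp, show 2 * (k + 1) = 2 * k + 2 by ring, hC0]
  push_cast
  rw [show (2 * n + 2 * k + 2 : ℝ) = 2 * (n + k + 1) by ring]
  field_simp
  ring

lemma one_le_edgeRatio {k : ℝ} (hk : 1 ≤ k) : 1 ≤ edgeRatio k := by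
  have hden : 0 < 8 * k * (2 * k - 1) := mul_pos (by linarith) (by linarith)
  rw [edgeRatio, le_div_iff₀ hden]
  nlinarith

lemma mul_edgeRatio_le {k : ℝ} (hk : 1 ≤ k) : k * edgeRatio k ≤ k + 1 := by
  have hden : 0 < 8 * (2 * k - 1) := by linarith
  have hcancel : k * edgeRatio k = (16 * k ^ 2 - 1) / (8 * (2 * k - 1)) := by
    unfold edgeRatio
    field_simp
  rw [hcancel, div_le_iff₀ hden]
  nlinarith

lemma bulkRatio_nonneg {n k : ℝ} (hk : 0 ≤ k) (hkn : k ≤ n) : 0 ≤ bulkRatio n k := by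
  have hn : 0 ≤ n := hk.trans hkn
  have hnum : 0 ≤ n - k + 1 := by linarith
  exact div_nonneg (mul_nonneg (by positivity) hnum) (by positivity)

lemma one_sub_le_bulkRatio {n k : ℝ} (hn : 0 < n) (hk : 1 ≤ k) :
    1 - 7 / n * k ≤ bulkRatio n k := by
  rw [bulkRatio, le_div_iff₀ (by positivity),
    show 1 - 7 / n * k = (n - 7 * k) / n by field_simp, div_mul_eq_mul_div, div_le_iff₀ hn]
  have hexpand : 2 * (3 * n + k) * (n - k + 1) * n -
      (n - 7 * k) * (3 * (n + k + 1) * (2 * n + 2 * k + 1)) =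
      (26 * k - 3) * n ^ 2 + (56 * k - 3) * n + 76 * k ^ 2 * n +
        42 * k ^ 3 + 63 * k ^ 2 + 21 * k := by ring
  rw [← sub_nonneg, hexpand]
  have hquad : 0 ≤ (26 * k - 3) * n ^ 2 := mul_nonneg (by linarith) (by positivity)
  have hlin : 0 ≤ (56 * k - 3) * n := mul_nonneg (by linarith) hn.le
  have hrest : 0 ≤ 76 * k ^ 2 * n + 42 * k ^ 3 + 63 * k ^ 2 + 21 * k := by positivity
  linarith

lemma bulkRatio_le_one_sub {n k : ℝ} (hn : 0 < n) (hk : 0 ≤ k) (hkn : k ≤ n) :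
    bulkRatio n k ≤ 1 - 1 / (4 * n) * k := by
  rw [bulkRatio, div_le_iff₀ (by positivity),
    show 1 - 1 / (4 * n) * k = (4 * n - k) / (4 * n) by field_simp, div_mul_eq_mul_div,
    le_div_iff₀ (by positivity)]
  have hexpand : (4 * n - k) * (3 * (n + k + 1) * (2 * n + 2 * k + 1)) -
      2 * (3 * n + k) * (n - k + 1) * (4 * n) =
      58 * k * n ^ 2 + 12 * n ^ 2 + 14 * k ^ 2 * n + 10 * k * n + 9 * n +
        (n - k) * (6 * k ^ 2 + 9 * k + 3) := by ring
  rw [← sub_nonneg, hexpand]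
  have hgap : 0 ≤ (n - k) * (6 * k ^ 2 + 9 * k + 3) :=
    mul_nonneg (sub_nonneg.mpr hkn) (by positivity)
  have hrest : 0 ≤ 58 * k * n ^ 2 + 12 * n ^ 2 + 14 * k ^ 2 * n + 10 * k * n + 9 * n := by
    positivity
  linarith

lemma one_sub_mul_criticalWeight_le {n k : ℕ} (hk : 1 ≤ k) (hkn : k < n) :
    (1 - 7 / n * k) * criticalWeight n k ≤ criticalWeight n (k + 1) := by
  have hk' : (1 : ℝ) ≤ k := by exact_mod_cast hk
  have hkn' : (k : ℝ) ≤ n := by exact_mod_cast hkn.le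
  have hn : (0 : ℝ) < n := by linarith
  rw [criticalWeight_succ hk hkn]
  refine mul_le_mul_of_nonneg_right ?_ (criticalWeight_pos n k).le
  calc 1 - 7 / n * k ≤ bulkRatio n k := one_sub_le_bulkRatio hn hk'
    _ ≤ edgeRatio k * bulkRatio n k :=
        le_mul_of_one_le_left (bulkRatio_nonneg (by positivity) hkn') (one_le_edgeRatio hk')

lemma mul_criticalWeight_succ_le {n k : ℕ} (hk : 1 ≤ k) (hkn : k < n) :
    k * criticalWeight n (k + 1) ≤ (k + 1 - 1 / (4 * n) * k ^ 2) * criticalWeight n k := by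
  have hk' : (1 : ℝ) ≤ k := by exact_mod_cast hk
  have hkn' : (k : ℝ) ≤ n := by exact_mod_cast hkn.le
  have hn : (0 : ℝ) < n := by linarith
  rw [criticalWeight_succ hk hkn, ← mul_assoc, ← mul_assoc]
  refine mul_le_mul_of_nonneg_right ?_ (criticalWeight_pos n k).le
  calc k * edgeRatio k * bulkRatio n k ≤ (k + 1) * (1 - 1 / (4 * n) * k) :=
        mul_le_mul (mul_edgeRatio_le hk') (bulkRatio_le_one_sub hn (by positivity) hkn')
          (bulkRatio_nonneg (by positivity) hkn') (by positivity)
    _ = k + 1 - 1 / (4 * n) * k ^ 2 - 1 / (4 * n) * k := by ring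
    _ ≤ k + 1 - 1 / (4 * n) * k ^ 2 := sub_le_self _ (by positivity)

lemma sub_mul_sum_criticalWeight_le {n K L : ℕ} (hKL : K ≤ L) (hL : 14 * L ^ 2 ≤ n) :
    ((L : ℝ) - K) * ∑ k ∈ Finset.Icc 1 K, criticalWeight n k ≤
      K * (2 * ∑ k ∈ Finset.Icc 1 n, criticalWeight n k) := by
  have hLn : L ≤ n := by nlinarith
  have hslope : 2 * (7 / n * (L : ℝ) ^ 2) ≤ 1 := by
    calc 2 * (7 / n * (L : ℝ) ^ 2) = ((14 * L ^ 2 : ℕ) : ℝ) / n := by push_cast; ring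
      _ ≤ 1 := div_le_one_of_le₀ (by exact_mod_cast hL) n.cast_nonneg
  refine sub_mul_sum_Icc_le (fun k => (criticalWeight_pos n k).le) (by positivity) hKL hLn hslope
    fun k hk => ?_
  rw [Finset.mem_Ico] at hk
  exact one_sub_mul_criticalWeight_le hk.1 (hk.2.trans_le hLn)

lemma sum_criticalWeight_lt_mul_sqrt_le {n : ℕ} (hn : 256 ≤ n) {ε : ℝ} (hε : 0 ≤ ε)
    (hε' : ε ≤ 1 / 16) :
    ∑ k ∈ Finset.Icc 1 n with ((k : ℕ) : ℝ) < ε * √n, criticalWeight n k ≤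
      16 * ε * ∑ k ∈ Finset.Icc 1 n, criticalWeight n k := by
  have hn0 : (0 : ℝ) < n := by positivity
  have hsq : √(n : ℝ) ^ 2 = n := sq_sqrt hn0.le
  have hsqrt : 16 ≤ √(n : ℝ) := le_sqrt_of_sq_le (by norm_num; exact_mod_cast hn)
  set K := ⌊ε * √n⌋₊
  set L := ⌊√n / 4⌋₊
  have hK : (K : ℝ) ≤ ε * √n := Nat.floor_le (by positivity)
  have hL : (L : ℝ) ≤ √n / 4 := Nat.floor_le (by positivity)
  have hgap : √n / 8 ≤ (L : ℝ) - K := by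
    have := Nat.lt_floor_add_one (√n / 4)
    nlinarith
  have hKL : K ≤ L := by
    rw [← Nat.cast_le (α := ℝ)]
    linarith
  have hL14 : 14 * L ^ 2 ≤ n := by
    rw [← Nat.cast_le (α := ℝ)]
    push_cast
    nlinarith
  have hsub : (Finset.Icc 1 n).filter (fun k : ℕ => (k : ℝ) < ε * √n) ⊆ Finset.Icc 1 K := by
    intro k hk
    rw [Finset.mem_filter, Finset.mem_Icc] at hk
    exact Finset.mem_Icc.mpr ⟨hk.1.1, Nat.le_floor hk.2.le⟩
  have hnonneg : ∀ k, 0 ≤ criticalWeight n k := fun k => (criticalWeight_pos n k).le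
  refine le_of_mul_le_mul_left ?_ (by positivity : 0 < √n / 8)
  calc √n / 8 * ∑ k ∈ Finset.Icc 1 n with ((k : ℕ) : ℝ) < ε * √n, criticalWeight n k
      ≤ (L - K) * ∑ k ∈ Finset.Icc 1 K, criticalWeight n k :=
        mul_le_mul hgap
          (Finset.sum_le_sum_of_subset_of_nonneg hsub fun k _ _ => hnonneg k)
          (Finset.sum_nonneg fun k _ => hnonneg k) (by linarith)
    _ ≤ K * (2 * ∑ k ∈ Finset.Icc 1 n, criticalWeight n k) :=
        sub_mul_sum_criticalWeight_le hKL hL14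
    _ ≤ ε * √n * (2 * ∑ k ∈ Finset.Icc 1 n, criticalWeight n k) := by
        have := Finset.sum_nonneg fun k (_ : k ∈ Finset.Icc 1 n) => hnonneg k
        gcongr
    _ = √n / 8 * (16 * ε * ∑ k ∈ Finset.Icc 1 n, criticalWeight n k) := by ring

lemma sum_criticalWeight_mul_sqrt_lt_le {n : ℕ} (hn : 1 ≤ n) {T : ℝ} (hT : 0 < T) :
    ∑ k ∈ Finset.Icc 1 n with T * √n < ((k : ℕ) : ℝ), criticalWeight n k ≤
      8 / T ^ 2 * ∑ k ∈ Finset.Icc 1 n, criticalWeight n k := by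
  have hn0 : (0 : ℝ) < n := by exact_mod_cast hn
  have hmoment := mul_sum_sq_le_two_mul_sum (a := criticalWeight n) (b := 1 / (4 * n)) hn
    (criticalWeight_pos n n).le (by field_simp; norm_num) fun k hk => by
      rw [Finset.mem_Ico] at hk
      exact mul_criticalWeight_succ_le hk.1 hk.2
  have hchebyshev := sq_mul_sum_filter_lt_le (s := Finset.Icc 1 n) (X := fun k : ℕ => (k : ℝ))
    (fun k _ => (criticalWeight_pos n k).le) (t := T * √n) (by positivity)
  rw [mul_pow, sq_sqrt hn0.le] at hchebyshev
  rw [div_mul_eq_mul_div, le_div_iff₀ (by positivity)]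
  rw [one_div_mul_eq_div, div_le_iff₀ (by positivity)] at hmoment
  refine le_of_mul_le_mul_left ?_ hn0
  linarith

lemma sqrt_le_sqrt_two_mul_cast (n : ℕ) : √(n : ℝ) ≤ √(2 * n : ℕ) :=
  sqrt_le_sqrt (by exact_mod_cast Nat.le_mul_of_pos_left n two_pos)

lemma sqrt_two_mul_cast_le (n : ℕ) : √(2 * n : ℕ) ≤ 2 * √(n : ℝ) := by
  rw [sqrt_le_left (by positivity), mul_pow, sq_sqrt n.cast_nonneg]
  push_cast
  linarith [n.cast_nonneg (α := ℝ)]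

lemma sum_criticalWeight_not_le_two_mul {n : ℕ} (hn : 256 ≤ n) {ε : ℝ} (hε : 0 ≤ ε)
    (hε' : ε ≤ 1 / 16) :
    ∑ k ∈ Finset.Icc 1 n with ¬ε * √(2 * n : ℕ) ≤ ((2 * k : ℕ) : ℝ), criticalWeight n k ≤
      16 * ε * ∑ k ∈ Finset.Icc 1 n, criticalWeight n k := by
  refine (Finset.sum_le_sum_of_subset_of_nonneg ?_ fun k _ _ => (criticalWeight_pos n k).le).trans
    (sum_criticalWeight_lt_mul_sqrt_le hn hε hε')
  refine Finset.monotone_filter_right _ fun k _ hk => ?_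
  push_cast at hk
  have := mul_le_mul_of_nonneg_left (sqrt_two_mul_cast_le n) hε
  push_cast at this
  linarith

lemma sum_criticalWeight_not_two_mul_le {n : ℕ} (hn : 1 ≤ n) {ε : ℝ} (hε : 0 < ε) :
    ∑ k ∈ Finset.Icc 1 n with ¬((2 * k : ℕ) : ℝ) ≤ ε⁻¹ * √(2 * n : ℕ), criticalWeight n k ≤
      32 * ε ^ 2 * ∑ k ∈ Finset.Icc 1 n, criticalWeight n k := by
  rw [show 32 * ε ^ 2 = 8 / (ε⁻¹ / 2) ^ 2 by field_simp; norm_num]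
  refine (Finset.sum_le_sum_of_subset_of_nonneg ?_ fun k _ _ => (criticalWeight_pos n k).le).trans
    (sum_criticalWeight_mul_sqrt_lt_le hn (by positivity))
  refine Finset.monotone_filter_right _ fun k _ hk => ?_
  push_cast at hk
  have := mul_le_mul_of_nonneg_left (sqrt_le_sqrt_two_mul_cast n) (inv_nonneg.mpr hε.le)
  push_cast at this
  linarith

end Weights

section Probability

lemma Θ_log_six_eq_sum_criticalWeight (n : ℕ) :
    Θ (log 6) (2 * n) = ∑ k ∈ Finset.Icc 1 n, criticalWeight n k := by
  have := sum_filter_even_eq_sum_Icc n (fun _ => True) (w (log 6) (2 * n))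
  simp only [and_true, Finset.filter_true] at this
  unfold Θ criticalWeight
  convert this

lemma sum_filter_P_log_six_eq_div (n : ℕ) (p : ℕ → Prop) [DecidablePred p] :
    ∑ m ∈ Finset.range (2 * n + 1) with Even m ∧ 2 ≤ m ∧ p m, P (log 6) (2 * n) m =
      (∑ k ∈ Finset.Icc 1 n with p (2 * k), criticalWeight n k) /
        ∑ k ∈ Finset.Icc 1 n, criticalWeight n k := by
  rw [sum_filter_even_eq_sum_Icc, ← Θ_log_six_eq_sum_criticalWeight, Finset.sum_div]
  rfl

lemma one_sub_le_sum_P_log_six {n : ℕ} (hn : 256 ≤ n) {ε : ℝ} (hε : 0 < ε) (hε' : ε ≤ 1 / 16) :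
    1 - 48 * ε ≤ ∑ m ∈ Finset.range (2 * n + 1) with Even m ∧ 2 ≤ m ∧
      ε * √(2 * n : ℕ) ≤ ((m : ℕ) : ℝ) ∧ (m : ℝ) ≤ ε⁻¹ * √(2 * n : ℕ), P (log 6) (2 * n) m := by
  have hnonneg : ∀ k ∈ Finset.Icc 1 n, 0 ≤ criticalWeight n k :=
    fun k _ => (criticalWeight_pos n k).le
  have htotal : 0 < ∑ k ∈ Finset.Icc 1 n, criticalWeight n k :=
    Finset.sum_pos (fun k _ => criticalWeight_pos n k) ⟨1, Finset.mem_Icc.mpr (by omega)⟩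
  rw [sum_filter_P_log_six_eq_div n fun m =>
      ε * √(2 * n : ℕ) ≤ (m : ℝ) ∧ (m : ℝ) ≤ ε⁻¹ * √(2 * n : ℕ), le_div_iff₀ htotal]
  have hsplit := sum_le_sum_filter_and_add_sum_filter_not (Finset.Icc 1 n) hnonneg
    (fun k => ε * √(2 * n : ℕ) ≤ (2 * k : ℕ)) (fun k => (2 * k : ℕ) ≤ ε⁻¹ * √(2 * n : ℕ))
  have hsmall := sum_criticalWeight_not_le_two_mul hn hε.le hε'
  have hlarge := sum_criticalWeight_not_two_mul_le (by omega : 1 ≤ n) hε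
  have hquad : 32 * ε ^ 2 * ∑ k ∈ Finset.Icc 1 n, criticalWeight n k ≤
      32 * ε * ∑ k ∈ Finset.Icc 1 n, criticalWeight n k := by
    gcongr
    nlinarith
  linarith

end Probability

lemma evenAtTop_eq_map : evenAtTop = map (2 * ·) atTop := by
  ext s
  simp only [evenAtTop, mem_inf_principal, mem_map, mem_atTop_sets, Set.mem_preimage,
    Set.mem_ofPred_eq]
  constructor
  · rintro ⟨N, hN⟩
    exact ⟨N, fun n hn => hN (2 * n) (by omega) (even_two_mul n)⟩
  · rintro ⟨n, hn⟩
    refine ⟨2 * n, fun N hN hEven => ?_⟩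
    obtain ⟨k, rfl⟩ := hEven.two_dvd
    exact hn k (by omega)

instance evenAtTop_neBot : evenAtTop.NeBot := by
  rw [evenAtTop_eq_map]
  infer_instance

/-- Critical phase: at μ₁ = log 6 the boundary length is of order √N, i.e. for every
δ > 0 there is ε > 0 with liminf P(ε√N ≤ m ≤ ε⁻¹√N) ≥ 1 - δ along even N. -/
theorem critical_order_sqrt :
    ∀ δ : ℝ, 0 < δ → ∃ ε : ℝ, 0 < ε ∧
      1 - δ ≤
        Filter.liminf
          (fun N : ℕ =>
            ∑ m ∈ (Finset.range (N + 1)).filter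
                (fun m : ℕ => Even m ∧ 2 ≤ m ∧
                  ε * Real.sqrt N ≤ (m : ℝ) ∧ (m : ℝ) ≤ ε⁻¹ * Real.sqrt N),
              P (Real.log 6) N m)
          evenAtTop := by
  intro δ hδ
  obtain ⟨ε, hε, hεδ⟩ : ∃ ε : ℝ, 0 < ε ∧ ε ≤ min (1 / 16) (δ / 48) := ⟨_, by positivity, le_rfl⟩
  obtain ⟨hε', hδ'⟩ := le_min_iff.mp hεδ
  refine ⟨ε, hε, le_liminf_of_le ?_ ?_⟩
  · refine isCoboundedUnder_ge_of_le evenAtTop (x := 1) fun N => sum_P_le_one (log 6) ?_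
    exact Finset.monotone_filter_right _ fun m _ hm => ⟨hm.1, hm.2.1⟩
  · rw [evenAtTop_eq_map, eventually_map]
    filter_upwards [eventually_ge_atTop 256] with n hn
    have := one_sub_le_sum_P_log_six hn hε hε'
    linarith
end

section
/- Critical ratio scaling: let μ₁ = log 6 and fix β > 0. If (m_N) is a sequence of even integers with m_N/√N → β as N → ∞ along even integers, then √N · ( C₀(N, m_N + 2)/(6·C₀(N, m_N)) − 1 ) → 1/β − (8/3)·β as N → ∞; i.e. at criticality the one-step probability ratio equals 1 + (1/m − (8/3)·m/N)·(1 + o(1)) for m of order √N. -/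
open Filter Real MeasureTheory

/-!
For `N ≡ m (mod 2)` and `2 ≤ m ≤ N - 2` the factorials in the ratio telescope into three
factors, each tending to `1`:
`C₀(N, m+2) / (6 C₀(N, m)) = (3N+m)/(3(N+m+2)) · (N-m+2)/(N+m+1) · (4m²-1)/(4m(m-1))`.
For `m ~ β√N`, their deviations from `1`, scaled by `√N`, tend to `-2β/3`, `-2β` and `1/β`.
Such first-order deviations add up under multiplication.
-/

open scoped Topology

section FirstOrderAsymptotics

variable {α 𝕜 : Type*} [Field 𝕜] [LinearOrder 𝕜] [IsStrictOrderedRing 𝕜] [TopologicalSpace 𝕜]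
  [OrderTopology 𝕜] {l : Filter α} {s u f g : α → 𝕜} {a b β : 𝕜}

lemma tendsto_one_of_tendsto_mul_sub_one (hs : Tendsto s l atTop)
    (hf : Tendsto (fun x => s x * (f x - 1)) l (𝓝 a)) : Tendsto f l (𝓝 1) := by
  have hlim : Tendsto (fun x => 1 + (s x)⁻¹ * (s x * (f x - 1))) l (𝓝 1) := by
    simpa using (hs.inv_tendsto_atTop.mul hf).const_add 1
  refine hlim.congr' ?_
  filter_upwards [hs.eventually_ne_atTop 0] with x hx
  rw [inv_mul_cancel_left₀ hx]
  ring

lemma tendsto_mul_mul_sub_one (hs : Tendsto s l atTop)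
    (hf : Tendsto (fun x => s x * (f x - 1)) l (𝓝 a))
    (hg : Tendsto (fun x => s x * (g x - 1)) l (𝓝 b)) :
    Tendsto (fun x => s x * (f x * g x - 1)) l (𝓝 (a + b)) := by
  have hg_one : Tendsto g l (𝓝 1) := tendsto_one_of_tendsto_mul_sub_one hs hg
  have hsum : Tendsto (fun x => s x * (f x - 1) * g x + s x * (g x - 1)) l (𝓝 (a + b)) := by
    simpa using (hf.mul hg_one).add hg
  exact hsum.congr fun x => by ring

lemma tendsto_atTop_of_tendsto_div (hβ : 0 < β) (hs : Tendsto s l atTop)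
    (hu : Tendsto (fun x => u x / s x) l (𝓝 β)) : Tendsto u l atTop := by
  refine (hu.pos_mul_atTop hβ hs).congr' ?_
  filter_upwards [hs.eventually_ne_atTop 0] with x hx
  exact div_mul_cancel₀ (u x) hx

lemma tendsto_sq_add_mul_atTop (hs : Tendsto s l atTop)
    (hu : Tendsto (fun x => u x / s x) l (𝓝 β)) (c : 𝕜) :
    Tendsto (fun x => s x ^ 2 + c * u x) l atTop := by
  refine (hs.atTop_mul_atTop₀ (hs.atTop_add (hu.const_mul c))).congr' ?_
  filter_upwards [hs.eventually_ne_atTop 0] with x hx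
  field_simp

lemma tendsto_mul_linear_div_sq_add (hs : Tendsto s l atTop)
    (hu : Tendsto (fun x => u x / s x) l (𝓝 β)) (a b c d : 𝕜) :
    Tendsto (fun x => s x * ((a * u x + b) / (s x ^ 2 + c * u x + d))) l (𝓝 (a * β)) := by
  have hinv : Tendsto (fun x => (s x)⁻¹) l (𝓝 0) := hs.inv_tendsto_atTop
  have hnum : Tendsto (fun x => a * (u x / s x) + b * (s x)⁻¹) l (𝓝 (a * β)) := by
    simpa using (hu.const_mul a).add (hinv.const_mul b)
  have hden : Tendsto (fun x => 1 + c * (u x / s x) * (s x)⁻¹ + d * (s x)⁻¹ ^ 2) l (𝓝 1) := by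
    simpa using (((hu.const_mul c).mul hinv).const_add 1).add ((hinv.pow 2).const_mul d)
  have hquot := hnum.div hden one_ne_zero
  rw [div_one] at hquot
  refine hquot.congr' ?_
  filter_upwards [hs.eventually_ne_atTop 0] with x hx
  have hnum_eq : a * (u x / s x) + b * (s x)⁻¹ = s x * (a * u x + b) / s x ^ 2 := by
    field_simp
  have hden_eq : 1 + c * (u x / s x) * (s x)⁻¹ + d * (s x)⁻¹ ^ 2 =
      (s x ^ 2 + c * u x + d) / s x ^ 2 := by
    field_simp
  rw [Pi.div_apply, hnum_eq, hden_eq, div_div_div_cancel_right₀ (pow_ne_zero 2 hx), mul_div_assoc]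

lemma tendsto_mul_three_sq_add_div_sub_one (hs : Tendsto s l atTop)
    (hu : Tendsto (fun x => u x / s x) l (𝓝 β)) :
    Tendsto (fun x => s x * ((3 * s x ^ 2 + u x) / (3 * (s x ^ 2 + u x + 2)) - 1)) l
      (𝓝 (-(2 / 3) * β)) := by
  refine (tendsto_mul_linear_div_sq_add hs hu (-(2 / 3)) (-2) 1 2).congr' ?_
  filter_upwards [(tendsto_sq_add_mul_atTop hs hu 1).eventually_gt_atTop 0] with x hx
  have hden : s x ^ 2 + u x + 2 ≠ 0 := by linarith
  rw [one_mul]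
  field_simp
  ring

lemma tendsto_mul_sq_sub_div_sub_one (hs : Tendsto s l atTop)
    (hu : Tendsto (fun x => u x / s x) l (𝓝 β)) :
    Tendsto (fun x => s x * ((s x ^ 2 - u x + 2) / (s x ^ 2 + u x + 1) - 1)) l
      (𝓝 (-2 * β)) := by
  refine (tendsto_mul_linear_div_sq_add hs hu (-2) 1 1 1).congr' ?_
  filter_upwards [(tendsto_sq_add_mul_atTop hs hu 1).eventually_gt_atTop 0] with x hx
  have hden : s x ^ 2 + u x + 1 ≠ 0 := by linarith
  rw [one_mul]
  field_simp
  ring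

lemma tendsto_inv_zero_of_tendsto_div (hβ : β ≠ 0) (hs : Tendsto s l atTop)
    (hu : Tendsto (fun x => u x / s x) l (𝓝 β)) : Tendsto (fun x => (u x)⁻¹) l (𝓝 0) := by
  have hlim : Tendsto (fun x => (u x / s x)⁻¹ * (s x)⁻¹) l (𝓝 0) := by
    simpa using (hu.inv₀ hβ).mul hs.inv_tendsto_atTop
  refine hlim.congr' ?_
  filter_upwards [hs.eventually_ne_atTop 0] with x hx
  rw [← mul_inv, div_mul_cancel₀ _ hx]

lemma tendsto_mul_four_sq_sub_one_div_sub_one (hβ : β ≠ 0) (hs : Tendsto s l atTop)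
    (hu : Tendsto (fun x => u x / s x) l (𝓝 β)) :
    Tendsto (fun x => s x * ((4 * u x ^ 2 - 1) / (4 * u x * (u x - 1)) - 1)) l
      (𝓝 (1 / β)) := by
  have hinv : Tendsto (fun x => (u x)⁻¹) l (𝓝 0) := tendsto_inv_zero_of_tendsto_div hβ hs hu
  have hnum : Tendsto (fun x => 1 - (u x)⁻¹ / 4) l (𝓝 1) := by
    simpa using (hinv.div_const 4).const_sub 1
  have hden : Tendsto (fun x => 1 - (u x)⁻¹) l (𝓝 1) := by
    simpa using hinv.const_sub 1
  have hlim : Tendsto (fun x => (u x / s x)⁻¹ * ((1 - (u x)⁻¹ / 4) / (1 - (u x)⁻¹))) l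
      (𝓝 (1 / β)) := by
    simpa using (hu.inv₀ hβ).mul (hnum.div hden one_ne_zero)
  refine hlim.congr' ?_
  filter_upwards [hu.eventually_ne hβ, hden.eventually_ne one_ne_zero] with x hdiv hsub
  have hu_ne : u x ≠ 0 := (div_ne_zero_iff.1 hdiv).1
  have hu_sub_ne : u x - 1 ≠ 0 := fun h => hsub (by simp [sub_eq_zero.1 h])
  have hsub_eq : 1 - (u x)⁻¹ = (u x - 1) / u x := by field_simp
  rw [hsub_eq]
  field_simp
  ring

end FirstOrderAsymptotics

lemma C0_add_two_add_two_mul (k j : ℕ) :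
    C0 (k + 2 + 2 * j) (k + 2) =
      2 ^ (j + 2) * (2 * k + 3 * j + 3).factorial * (2 * k + 1).factorial /
        ((j + 1).factorial * (2 * k + 2 * j + 4).factorial * (k.factorial : ℝ) ^ 2) := by
  have hj : (k + 2 + 2 * j - (k + 2)) / 2 = j := by omega
  rw [C0, hj, show 2 * (k + 2) + 3 * j - 1 = 2 * k + 3 * j + 3 by omega,
    show 2 * (k + 2) - 3 = 2 * k + 1 by omega,
    show 2 * (k + 2) + 2 * j = 2 * k + 2 * j + 4 by omega, Nat.add_sub_cancel]

lemma C0_add_four_div_six_mul_C0_add_two (k i : ℕ) :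
    C0 (k + 4 + 2 * i) (k + 4) / (6 * C0 (k + 4 + 2 * i) (k + 2)) =
      (2 * k + 3 * i + 7) / (3 * (k + i + 4)) * (2 * (i + 2) / (2 * k + 2 * i + 7)) *
        ((2 * k + 3) * (2 * k + 5) / (4 * (k + 2) * (k + 1)) : ℝ) := by
  have hnum := C0_add_two_add_two_mul (k + 2) i
  have hden := C0_add_two_add_two_mul k (i + 1)
  rw [show k + 2 + 2 * (i + 1) = k + 4 + 2 * i by ring] at hden
  rw [hnum, hden,
    show 2 * (k + 2) + 3 * i + 3 = 2 * k + 3 * i + 7 by ring,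
    show 2 * k + 3 * (i + 1) + 3 = 2 * k + 3 * i + 6 by ring,
    show 2 * (k + 2) + 1 = 2 * k + 5 by ring,
    show 2 * (k + 2) + 2 * i + 4 = 2 * k + 2 * i + 8 by ring,
    show 2 * k + 2 * (i + 1) + 4 = 2 * k + 2 * i + 6 by ring]
  simp only [Nat.factorial_succ]
  push_cast
  field_simp
  ring

lemma C0_add_two_div_six_mul_C0 {N m : ℕ} (hm : 2 ≤ m) (hmN : m + 2 ≤ N)
    (hparity : N ≡ m [MOD 2]) :
    C0 N (m + 2) / (6 * C0 N m) =
      (3 * N + m) / (3 * (N + m + 2)) * ((N - m + 2) / (N + m + 1)) *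
        ((4 * m ^ 2 - 1) / (4 * m * (m - 1)) : ℝ) := by
  obtain ⟨k, rfl⟩ : ∃ k, m = k + 2 := ⟨m - 2, by omega⟩
  obtain ⟨i, rfl⟩ : ∃ i, N = k + 4 + 2 * i :=
    ⟨(N - k - 4) / 2, by unfold Nat.ModEq at hparity; omega⟩
  rw [C0_add_four_div_six_mul_C0_add_two]
  push_cast
  congr 1
  · congr 1
    · rw [div_eq_div_iff (by positivity) (by positivity)]
      ring
    · congr 1 <;> ring
  · congr 1 <;> ring

theorem critical_ratio_scaling_general {α : Type*} {l : Filter α} {N m : α → ℕ} {β : ℝ}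
    (hβ : 0 < β) (hN : Tendsto N l atTop) (hparity : ∀ᶠ x in l, N x ≡ m x [MOD 2])
    (hm : Tendsto (fun x => (m x : ℝ) / √(N x)) l (𝓝 β)) :
    Tendsto (fun x => √(N x) * (C0 (N x) (m x + 2) / (6 * C0 (N x) (m x)) - 1)) l
      (𝓝 (1 / β - 8 / 3 * β)) := by
  have hs : Tendsto (fun x => √(N x : ℝ)) l atTop :=
    tendsto_sqrt_atTop.comp (tendsto_natCast_atTop_atTop.comp hN)
  have hlim := tendsto_mul_mul_sub_one hs
    (tendsto_mul_mul_sub_one hs (tendsto_mul_three_sq_add_div_sub_one hs hm)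
      (tendsto_mul_sq_sub_div_sub_one hs hm))
    (tendsto_mul_four_sq_sub_one_div_sub_one hβ.ne' hs hm)
  rw [show -(2 / 3) * β + -2 * β + 1 / β = 1 / β - 8 / 3 * β by ring] at hlim
  refine hlim.congr' ?_
  filter_upwards [hparity,
    (tendsto_atTop_of_tendsto_div hβ hs hm).eventually_ge_atTop 2,
    (tendsto_sq_add_mul_atTop hs hm (-1)).eventually_ge_atTop 2] with x hx hm_two hmN
  rw [sq_sqrt (Nat.cast_nonneg _)] at hmN ⊢
  have hmN' : (m x : ℝ) + 2 ≤ N x := by linarith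
  rw [C0_add_two_div_six_mul_C0 (by exact_mod_cast hm_two) (by exact_mod_cast hmN') hx]

/-- Critical ratio scaling: if m_N is even and m_N/√N → β > 0 along even N, then
√N (C₀(N, m_N + 2)/(6 C₀(N, m_N)) - 1) → 1/β - (8/3)β along even N. -/
theorem critical_ratio_scaling (β : ℝ) (hβ : 0 < β) (m : ℕ → ℕ)
    (hmeven : ∀ N : ℕ, Even (m N))
    (hm : Filter.Tendsto (fun N : ℕ => ((m N : ℝ)) / Real.sqrt N) evenAtTop (nhds β)) :
    Filter.Tendsto
      (fun N : ℕ => Real.sqrt N * (C0 N (m N + 2) / (6 * C0 N (m N)) - 1))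
      evenAtTop (nhds (1 / β - (8 / 3) * β)) := by
  have hparity : ∀ᶠ N in evenAtTop, N ≡ m N [MOD 2] :=
    mem_inf_of_right fun N hN => (Nat.even_iff.1 hN).trans (Nat.even_iff.1 (hmeven N)).symm
  exact critical_ratio_scaling_general hβ (tendsto_id.mono_left inf_le_left) hparity hm
end
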